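/- Consider f, g : ℝ → ℝ given by f(t) = arctan(t) and g(t) = −arctan(t). Then for every t ∈ ℝ the metric slopes satisfy |∇f|(t) = |∇g|(t) = 1/(t² + 1), both f and g are bounded, yet there is no constant c ∈ ℝ such that f(t) = g(t) + c for all t ∈ ℝ. -/

import Mathlib

open Filter Topology
open scoped ENNReal Classical

/-- The metric slope of `f : M → ℝ` at `x`: it is `0` if `x` is an isolated point of `M`,
and otherwise `limsup_{y → x, y ≠ x} (f x - f y)⁺ / d(x,y)`, with values in `[0, +∞]`. -/
noncomputable def metricSlope {M : Type*} [MetricSpace M] (f : M → ℝ) (x : M) : ℝ≥0∞ :=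
  if 𝓝[≠] x = ⊥ then 0
  else Filter.limsup (fun y => ENNReal.ofReal (max (f x - f y) 0 / dist x y)) (𝓝[≠] x)

/-! At a point of differentiability the slope is the norm of the derivative: the first-order
expansion bounds it from above, while the directions `v` and `-v` together bound it from below by
`|f' v| / ‖v‖`. Hence the slope does not see the sign of the derivative, and `arctan` and `-arctan`
share theirs. -/

section MetricSpace

variable {M : Type*} [MetricSpace M] {f : M → ℝ} {x : M}

theorem metricSlope_eq_limsup (f : M → ℝ) (x : M) :
    metricSlope f x =
      limsup (fun y => ENNReal.ofReal ((f x - f y) / dist x y)) (𝓝[≠] x) := by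
  rw [metricSlope]
  split_ifs with hx
  · rw [hx, limsup_bot, ENNReal.bot_eq_zero]
  · congr with y
    rw [← max_div_div_right dist_nonneg, zero_div, ENNReal.ofReal_max, ENNReal.ofReal_zero,
      max_eq_left zero_le]

theorem metricSlope_le_of_eventually {r : ℝ} (h : ∀ᶠ y in 𝓝 x, f x - f y ≤ r * dist x y) :
    metricSlope f x ≤ ENNReal.ofReal r := by
  rw [metricSlope_eq_limsup]
  refine limsup_le_of_le (h := ?_)
  filter_upwards [h.filter_mono nhdsWithin_le_nhds, self_mem_nhdsWithin] with y hy hyx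
  exact ENNReal.ofReal_le_ofReal ((div_le_iff₀ (dist_pos.mpr (Ne.symm hyx))).mpr hy)

theorem le_metricSlope_of_tendsto {ι : Type*} {l : Filter ι} [l.NeBot] {u : ι → M} {r : ℝ}
    (hu : Tendsto u l (𝓝[≠] x))
    (hr : Tendsto (fun i => (f x - f (u i)) / dist x (u i)) l (𝓝 r)) :
    ENNReal.ofReal r ≤ metricSlope f x := by
  rw [metricSlope_eq_limsup, ← (ENNReal.tendsto_ofReal hr).limsup_eq]
  exact hu.limsup_comp_le_limsup (u := fun y => ENNReal.ofReal ((f x - f y) / dist x y))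

end MetricSpace

section NormedSpace

variable {E : Type*} [NormedAddCommGroup E] [NormedSpace ℝ E] {f : E → ℝ} {x : E}

theorem ofReal_neg_le_metricSlope_mul_of_hasLineDerivAt {f' : ℝ} {v : E}
    (h : HasLineDerivAt ℝ f f' x v) : ENNReal.ofReal (-f') ≤ metricSlope f x * ‖v‖ₑ := by
  rcases eq_or_ne v 0 with rfl | hv
  · simp [h.unique (hasLineDerivAt_zero (f := f) (x := x))]
  have hv_norm : 0 < ‖v‖ := norm_pos_iff.mpr hv
  have hray : Tendsto (fun t : ℝ => x + t • v) (𝓝[>] 0) (𝓝[≠] x) := by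
    refine tendsto_nhdsWithin_iff.mpr ⟨?_, ?_⟩
    · refine Tendsto.mono_left ?_ nhdsWithin_le_nhds
      exact Continuous.tendsto' (by fun_prop) _ _ (by simp)
    · filter_upwards [self_mem_nhdsWithin] with t ht
      simpa [hv] using (Set.mem_Ioi.mp ht).ne'
  have hquot : Tendsto (fun t : ℝ => (f x - f (x + t • v)) / dist x (x + t • v)) (𝓝[>] 0)
      (𝓝 (-f' / ‖v‖)) := by
    refine (h.tendsto_slope_zero_right.neg.div_const ‖v‖).congr' ?_
    filter_upwards [self_mem_nhdsWithin] with t ht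
    rw [dist_self_add_right, norm_smul, Real.norm_of_nonneg (Set.mem_Ioi.mp ht).le, smul_eq_mul]
    field_simp
    ring
  calc ENNReal.ofReal (-f') = ENNReal.ofReal (-f' / ‖v‖) * ‖v‖ₑ := by
        rw [← ofReal_norm, ← ENNReal.ofReal_mul' hv_norm.le, div_mul_cancel₀ _ hv_norm.ne']
    _ ≤ metricSlope f x * ‖v‖ₑ := by
        gcongr
        exact le_metricSlope_of_tendsto hray hquot

variable {f' : E →L[ℝ] ℝ}

theorem metricSlope_le_enorm_of_hasFDerivAt (h : HasFDerivAt f f' x) :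
    metricSlope f x ≤ ‖f'‖ₑ := by
  refine ENNReal.le_of_forall_pos_le_add fun ε hε _ => ?_
  have hslope : metricSlope f x ≤ ENNReal.ofReal (‖f'‖ + ε) := by
    refine metricSlope_le_of_eventually ?_
    filter_upwards [h.isLittleO.def (NNReal.coe_pos.mpr hε)] with y hy
    have hlin : -f' (y - x) ≤ ‖f'‖ * ‖y - x‖ := (neg_le_abs _).trans (f'.le_opNorm (y - x))
    have herr : -(f y - f x - f' (y - x)) ≤ ε * ‖y - x‖ := (neg_le_abs _).trans hy
    rw [dist_comm, dist_eq_norm]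
    linarith
  rwa [ENNReal.ofReal_add (norm_nonneg _) ε.coe_nonneg, ofReal_norm,
    ENNReal.ofReal_coe_nnreal] at hslope

theorem enorm_le_metricSlope_of_hasFDerivAt (h : HasFDerivAt f f' x) :
    ‖f'‖ₑ ≤ metricSlope f x := by
  refine f'.opENorm_le_bound fun v => ?_
  have hneg := ofReal_neg_le_metricSlope_mul_of_hasLineDerivAt (h.hasLineDerivAt v)
  have hpos := ofReal_neg_le_metricSlope_mul_of_hasLineDerivAt (h.hasLineDerivAt (-v))
  rw [map_neg, neg_neg, enorm_neg] at hpos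
  rw [Real.enorm_eq_ofReal_abs, abs, ENNReal.ofReal_max]
  exact max_le hpos hneg

theorem metricSlope_eq_enorm_of_hasFDerivAt (h : HasFDerivAt f f' x) :
    metricSlope f x = ‖f'‖ₑ :=
  (metricSlope_le_enorm_of_hasFDerivAt h).antisymm (enorm_le_metricSlope_of_hasFDerivAt h)

theorem metricSlope_neg_of_differentiableAt (h : DifferentiableAt ℝ f x) :
    metricSlope (fun y => -f y) x = metricSlope f x := by
  rw [metricSlope_eq_enorm_of_hasFDerivAt h.hasFDerivAt.fun_neg, enorm_neg,
    metricSlope_eq_enorm_of_hasFDerivAt h.hasFDerivAt]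

end NormedSpace

theorem metricSlope_eq_enorm_of_hasDerivAt {f : ℝ → ℝ} {f' x : ℝ} (h : HasDerivAt f f' x) :
    metricSlope f x = ‖f'‖ₑ := by
  rw [metricSlope_eq_enorm_of_hasFDerivAt h.hasFDerivAt, ← ofReal_norm,
    ContinuousLinearMap.norm_toSpanSingleton, ofReal_norm]

theorem metricSlope_arctan (t : ℝ) :
    metricSlope Real.arctan t = ENNReal.ofReal (1 / (t ^ 2 + 1)) := by
  rw [metricSlope_eq_enorm_of_hasDerivAt (Real.hasDerivAt_arctan t),
    Real.enorm_of_nonneg (by positivity), add_comm]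

theorem abs_arctan_lt_pi_div_two (t : ℝ) : |Real.arctan t| < Real.pi / 2 :=
  abs_lt.mpr (Real.arctan_mem_Ioo t)

/-- The functions `f = arctan` and `g = -arctan` have the same slope `1/(t²+1)`
at every point and are bounded, yet they do not differ by a constant. -/
theorem arctan_counterexample :
    (∀ t : ℝ, metricSlope Real.arctan t = ENNReal.ofReal (1 / (t ^ 2 + 1)) ∧
      metricSlope (fun s : ℝ => -Real.arctan s) t = ENNReal.ofReal (1 / (t ^ 2 + 1))) ∧
    (∃ C : ℝ, ∀ t : ℝ, |Real.arctan t| ≤ C) ∧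
    (∃ C : ℝ, ∀ t : ℝ, |(-Real.arctan t)| ≤ C) ∧
    ¬∃ c : ℝ, ∀ t : ℝ, Real.arctan t = -Real.arctan t + c := by
  refine ⟨fun t => ⟨metricSlope_arctan t, ?_⟩,
    ⟨Real.pi / 2, fun t => (abs_arctan_lt_pi_div_two t).le⟩, ⟨Real.pi / 2, fun t => ?_⟩, ?_⟩
  · rw [metricSlope_neg_of_differentiableAt (Real.differentiableAt_arctan t),
      metricSlope_arctan]
  · rw [abs_neg]
    exact (abs_arctan_lt_pi_div_two t).le
  · rintro ⟨c, hc⟩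
    have arctan_zero_eq_arctan_one : Real.arctan 0 = Real.arctan 1 := by linarith [hc 0, hc 1]
    exact zero_ne_one (Real.arctan_injective arctan_zero_eq_arctan_one)
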